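/- Let A₁, A₂, A₃ be points in the plane and l₁, l₂, l₃ polygonal lines joining A₁ to A₂, A₂ to A₃, and A₃ to A₁ respectively, such that Aᵢ does not lie on the image of l_{i+1} for each i = 1, 2, 3 (indices modulo 3). Then the cyclic Wu number wu(l₁, l₂, l₃) := 2·(w'(l₂, A₁) + w'(l₁, A₃) + w'(l₃, A₂)) is an odd integer. -/

import Mathlib

/-- Sum of the oriented angles ∠A₁OA₂ + ∠A₂OA₃ + ⋯ + ∠A_{m−1}OA_m at `O`
along a polygonal line given as a list of points in the plane `ℂ`,
where ∠AOB := Complex.arg ((B − O)/(A − O)) ∈ (−π, π]. -/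
noncomputable def angSum (O : ℂ) : List ℂ → ℝ
  | a :: b :: rest => Complex.arg ((b - O) / (a - O)) + angSum O (b :: rest)
  | _ => 0

/-- `w'(A₁…A_m, O)`: the (non-closed) winding number of a polygonal line around `O`,
i.e. `(∠A₁OA₂ + ⋯ + ∠A_{m−1}OA_m) / (2π)`. -/
noncomputable def wp (O : ℂ) (l : List ℂ) : ℝ := angSum O l / (2 * Real.pi)

/-- `w(A₁…A_m, O)`: the winding number of the closed polygonal line `A₁…A_m` around `O`,
i.e. `(∠A₁OA₂ + ⋯ + ∠A_{m−1}OA_m + ∠A_mOA₁) / (2π)`. -/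
noncomputable def wcl (O : ℂ) (l : List ℂ) : ℝ := wp O (l ++ [l.headI])

/-- The image of a polygonal line: the union of the segments between consecutive points. -/
def imagePL : List ℂ → Set ℂ
  | [] => ∅
  | [a] => {a}
  | a :: b :: rest => segment ℝ a b ∪ imagePL (b :: rest)

theorem head_mem_imagePL (a : ℂ) (l : List ℂ) : a ∈ imagePL (a :: l) := by
  cases l with
  | nil => simp [imagePL]
  | cons b r => exact Or.inl (left_mem_segment ℝ a b)

theorem last_mem_imagePL (l : List ℂ) (hn : l ≠ []) : l.getLast hn ∈ imagePL l := by
  induction l with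
  | nil => exact absurd rfl hn
  | cons a l ih =>
    cases l with
    | nil => simp [imagePL]
    | cons b r =>
      rw [List.getLast_cons (by simp)]
      exact Or.inr (ih (by simp))

theorem angSum_coe (O : ℂ) (l : List ℂ) (hn : l ≠ []) (h : O ∉ imagePL l) :
    ((angSum O l : ℝ) : Real.Angle) =
      (Complex.arg (l.getLast hn - O) : Real.Angle) - (Complex.arg (l.headI - O) : Real.Angle) := by
  induction l with
  | nil => exact absurd rfl hn
  | cons a l ih =>
    cases l with
    | nil => simp [angSum]
    | cons b r =>
      have h2 : O ∉ imagePL (b :: r) := fun hh => h (Or.inr hh)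
      have ha : a - O ≠ 0 := fun hh => h (by
        rw [← sub_eq_zero.mp hh]; exact head_mem_imagePL _ _)
      have hb : b - O ≠ 0 := fun hh => h2 (by
        rw [← sub_eq_zero.mp hh]; exact head_mem_imagePL _ _)
      have := ih (by simp) h2
      rw [List.getLast_cons (by simp), angSum, Real.Angle.coe_add, this,
        Complex.arg_div_coe_angle hb ha]
      simp only [List.headI]
      abel

theorem headI_mem_imagePL (l : List ℂ) (hn : l ≠ []) : l.headI ∈ imagePL l := by
  cases l with
  | nil => exact absurd rfl hn
  | cons a l => exact head_mem_imagePL a l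

/-- Let `A₁, A₂, A₃` be points in the plane and `l₁, l₂, l₃` polygonal
lines joining `A₁` to `A₂`, `A₂` to `A₃`, and `A₃` to `A₁` respectively, such that `Aᵢ`
does not lie on the image of `l_{i+1}` for each `i = 1, 2, 3` (indices modulo 3). Then
the cyclic Wu number `wu(l₁, l₂, l₃) := 2·(w'(l₂, A₁) + w'(l₁, A₃) + w'(l₃, A₂))` is an
odd integer. -/
theorem cyclic_wu_number_odd (A₁ A₂ A₃ : ℂ) (l₁ l₂ l₃ : List ℂ)
    (hn1 : l₁ ≠ []) (hn2 : l₂ ≠ []) (hn3 : l₃ ≠ [])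
    (hh1 : l₁.headI = A₁) (he1 : l₁.getLast hn1 = A₂)
    (hh2 : l₂.headI = A₂) (he2 : l₂.getLast hn2 = A₃)
    (hh3 : l₃.headI = A₃) (he3 : l₃.getLast hn3 = A₁)
    (h1 : A₁ ∉ imagePL l₂) (h2 : A₂ ∉ imagePL l₃) (h3 : A₃ ∉ imagePL l₁) :
    ∃ n : ℤ, Odd n ∧ 2 * (wp A₁ l₂ + wp A₃ l₁ + wp A₂ l₃) = n := by
  have e1 := angSum_coe A₁ l₂ hn2 h1
  have e2 := angSum_coe A₂ l₃ hn3 h2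
  have e3 := angSum_coe A₃ l₁ hn1 h3
  rw [hh2, he2] at e1
  rw [hh3, he3] at e2
  rw [hh1, he1] at e3
  have n12 : A₁ - A₂ ≠ 0 := fun hh => h1 (by
    rw [sub_eq_zero.mp hh]; nth_rewrite 1 [← hh2]; exact headI_mem_imagePL _ hn2)
  have n31 : A₃ - A₁ ≠ 0 := fun hh => h1 (by
    rw [← sub_eq_zero.mp hh]; nth_rewrite 1 [← he2]; exact last_mem_imagePL _ hn2)
  have n23 : A₂ - A₃ ≠ 0 := fun hh => h2 (by
    rw [sub_eq_zero.mp hh]; nth_rewrite 1 [← hh3]; exact headI_mem_imagePL _ hn3)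
  have key : ((angSum A₁ l₂ + angSum A₃ l₁ + angSum A₂ l₃ : ℝ) : Real.Angle)
      = (Real.pi : ℝ) := by
    rw [Real.Angle.coe_add, Real.Angle.coe_add, e1, e2, e3, ← neg_sub A₁ A₂, ← neg_sub A₃ A₁,
      ← neg_sub A₂ A₃, Complex.arg_neg_coe_angle n12, Complex.arg_neg_coe_angle n31,
      Complex.arg_neg_coe_angle n23]
    have hp : (Real.pi : Real.Angle) + (Real.pi : Real.Angle) = 0 :=
      Real.Angle.coe_pi_add_coe_pi
    have hp' : -(Real.pi : Real.Angle) = (Real.pi : Real.Angle) := Real.Angle.neg_coe_pi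
    generalize (Real.pi : Real.Angle) = p at *
    generalize (Complex.arg (A₁ - A₂) : Real.Angle) = x
    generalize (Complex.arg (A₃ - A₁) : Real.Angle) = y
    generalize (Complex.arg (A₂ - A₃) : Real.Angle) = z
    have : y - (x + p) + (z - (y + p)) + (x - (z + p)) = -(p + p) + -p := by abel
    rw [this, hp, hp']
    simp
  obtain ⟨k, hk⟩ := Real.Angle.angle_eq_iff_two_pi_dvd_sub.mp key
  refine ⟨2 * k + 1, ⟨k, rfl⟩, ?_⟩
  have hpi := Real.pi_ne_zero
  unfold wp
  push_cast
  field_simp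
  linarith
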